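/- arXiv:2102.05248 — 4 statements merged into one kernel-verified Lean document; each statement's English description precedes it below -/
import Mathlib

section
/- Let B be a set of m + p − 1 column indices of the constraint matrix A whose corresponding columns are linearly independent. Then the undirected subgraph of G whose edge set consists of the arcs contained in B is connected and spans V: for any two nodes i, j ∈ V there exists a walk from i to j each of whose steps traverses, in either direction, an arc belonging to B. -/
open Matrix

noncomputable section

/-- Node–arc incidence matrix of the directed multigraph given by `src`, `tgt`. -/
def incidenceMatrix (m n : ℕ) (src tgt : Fin n → Fin m) : Matrix (Fin m) (Fin n) ℝ :=
  Matrix.of fun i e => if src e = i then (1 : ℝ) else if tgt e = i then -1 else 0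

/-- Interdependence matrix `Q̂`: row `k` has `-α k` in the parent column and `1` in the
child column. -/
def interMatrix (n p : ℕ) (parent child : Fin p → Fin n) (α : Fin p → ℝ) :
    Matrix (Fin p) (Fin n) ℝ :=
  Matrix.of fun k e => if e = parent k then -α k else if e = child k then (1 : ℝ) else 0

/-- The constraint matrix `A = [[Â, 0], [Q̂, I]]`. -/
def constraintMatrix (m n p : ℕ) (src tgt : Fin n → Fin m)
    (parent child : Fin p → Fin n) (α : Fin p → ℝ) :
    Matrix (Fin m ⊕ Fin p) (Fin n ⊕ Fin p) ℝ :=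
  Matrix.fromBlocks (incidenceMatrix m n src tgt) 0 (interMatrix n p parent child α) 1

/-- A column index of `A` is an *interdependent variable* if it is a slack variable or an
arc appearing in some interdependence pair. -/
def interVar (n p : ℕ) (parent child : Fin p → Fin n) : Fin n ⊕ Fin p → Prop
  | Sum.inl e => ∃ k, parent k = e ∨ child k = e
  | Sum.inr _ => True

/-- `δ_e^T`. -/
def deltaCoef (m n : ℕ) (src tgt : Fin n → Fin m) (e : Fin n) (T : Finset (Fin m)) : ℝ :=
  if src e ∈ T ∧ tgt e ∉ T then 1 else if src e ∉ T ∧ tgt e ∈ T then -1 else 0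

/-- The `r × r` matrix `D` associated with a candidate basis: rows are indexed by the
trees `T_1, …, T_{r-p}` followed by the `p` interdependencies; columns are indexed by
the interdependent variables of `B`, enumerated by `col`. -/
def Dmat (m n p : ℕ) (src tgt : Fin n → Fin m) (parent child : Fin p → Fin n)
    (α : Fin p → ℝ) (r : ℕ) (T : Fin (r - p + 1) → Finset (Fin m))
    (col : Fin r → Fin n ⊕ Fin p) :
    Matrix (Fin (r - p) ⊕ Fin p) (Fin r) ℝ :=
  Matrix.of fun row j =>
    match row, col j with
    | Sum.inl h, Sum.inl e => deltaCoef m n src tgt e (T h.castSucc)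
    | Sum.inl _, Sum.inr _ => 0
    | Sum.inr k, Sum.inl e => interMatrix n p parent child α k e
    | Sum.inr k, Sum.inr k' => if k = k' then (1 : ℝ) else 0

/-- The independent arcs contained in `B` form an acyclic undirected subgraph of `G`. -/
def NoIndepCycle (m n p : ℕ) (src tgt : Fin n → Fin m) (parent child : Fin p → Fin n)
    (B : Finset (Fin n ⊕ Fin p)) : Prop :=
  ¬ ∃ (k : ℕ) (_ : 1 ≤ k) (e : Fin k → Fin n) (v : Fin (k + 1) → Fin m),
      Function.Injective e ∧
      (∀ i, ¬ interVar n p parent child (Sum.inl (e i))) ∧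
      (∀ i, Sum.inl (e i) ∈ B) ∧
      v 0 = v (Fin.last k) ∧
      ∀ i : Fin k, ({src (e i), tgt (e i)} : Set (Fin m)) = {v i.castSucc, v i.succ}

/-- Reachability in the undirected subgraph formed by the independent arcs of `B`. -/
def indepReach (m n p : ℕ) (src tgt : Fin n → Fin m) (parent child : Fin p → Fin n)
    (B : Finset (Fin n ⊕ Fin p)) : Fin m → Fin m → Prop :=
  Relation.ReflTransGen fun a b => ∃ e, Sum.inl e ∈ B ∧
    ¬ interVar n p parent child (Sum.inl e) ∧
    ((src e = a ∧ tgt e = b) ∨ (src e = b ∧ tgt e = a))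

/-- Reduced cost vector `c^π = c̄ − Aᵀ π` (slack variables get cost `0`). -/
def reducedCost (m n p : ℕ) (src tgt : Fin n → Fin m) (parent child : Fin p → Fin n)
    (α : Fin p → ℝ) (c : Fin n → ℝ) (π : Fin m ⊕ Fin p → ℝ) : Fin n ⊕ Fin p → ℝ :=
  fun j => Sum.elim c (fun _ => (0 : ℝ)) j
    - (constraintMatrix m n p src tgt parent child α)ᵀ.mulVec π j


/-- The sum of the node coordinates over a set of nodes, as a linear functional. -/
def nodeSum (m p : ℕ) (S : Fin m → Prop) [DecidablePred S] : (Fin m ⊕ Fin p → ℝ) →ₗ[ℝ] ℝ where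
  toFun x := ∑ i, if S i then x (Sum.inl i) else 0
  map_add' x y := by
    rw [← Finset.sum_add_distrib]
    refine Finset.sum_congr rfl fun i _ => ?_
    split_ifs <;> simp
  map_smul' c x := by
    simp only [RingHom.id_apply, smul_eq_mul]
    rw [Finset.mul_sum]
    refine Finset.sum_congr rfl fun i _ => ?_
    split_ifs <;> simp

/-- A node sum vanishes on the column of an arc that does not leave the node set,
and on every slack column. -/
theorem nodeSum_col (m n p : ℕ) (src tgt : Fin n → Fin m) (hst : ∀ e, src e ≠ tgt e)
    (parent child : Fin p → Fin n) (α : Fin p → ℝ) (S : Fin m → Prop) [DecidablePred S]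
    (b : Fin n ⊕ Fin p) (hb : ∀ e, b = Sum.inl e → (S (src e) ↔ S (tgt e))) :
    nodeSum m p S ((constraintMatrix m n p src tgt parent child α)ᵀ b) = 0 := by
  rcases b with e | k
  · have h := hb e rfl
    have key : ∀ i, (if S i then (constraintMatrix m n p src tgt parent child α)ᵀ (Sum.inl e)
        (Sum.inl i) else 0) = (if src e = i then (if S (src e) then (1 : ℝ) else 0) else 0)
        - (if tgt e = i then (if S (tgt e) then (1 : ℝ) else 0) else 0) := by
      intro i
      have := hst e
      simp only [constraintMatrix, Matrix.transpose_apply, Matrix.fromBlocks_apply₁₁,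
        incidenceMatrix, Matrix.of_apply]
      by_cases h1 : src e = i
      · subst h1
        simp [this.symm]
      · by_cases h2 : tgt e = i
        · subst h2
          by_cases h3 : S (tgt e) <;> simp [h1, h3]
        · simp [h1, h2]
    simp only [nodeSum, LinearMap.coe_mk, AddHom.coe_mk]
    rw [Finset.sum_congr rfl fun i _ => key i, Finset.sum_sub_distrib]
    simp [h]
  · simp [nodeSum, constraintMatrix]

/-- If `B` is a set of `m + p − 1` linearly independent columns of `A`,
then the arcs contained in `B` form a connected spanning subgraph of `G`. -/
theorem basis_arcs_connected (m n p : ℕ) (src tgt : Fin n → Fin m) (hst : ∀ e, src e ≠ tgt e)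
    (parent child : Fin p → Fin n) (α : Fin p → ℝ)
    (hpc : ∀ k k' : Fin p, parent k ≠ child k')
    (hpinj : Function.Injective parent) (hcinj : Function.Injective child)
    (B : Finset (Fin n ⊕ Fin p)) (hBcard : B.card = m + p - 1)
    (hBind : LinearIndependent ℝ (fun j : B =>
      (constraintMatrix m n p src tgt parent child α)ᵀ j.1)) :
    ∀ i j : Fin m, Relation.ReflTransGen
      (fun a b => ∃ e, Sum.inl e ∈ B ∧
        ((src e = a ∧ tgt e = b) ∨ (src e = b ∧ tgt e = a))) i j := by
  classical
  intro i j
  by_contra hij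
  set R : Fin m → Fin m → Prop := fun a b => ∃ e, Sum.inl e ∈ B ∧
        ((src e = a ∧ tgt e = b) ∨ (src e = b ∧ tgt e = a)) with hR
  set S : Fin m → Prop := fun x => Relation.ReflTransGen R i x with hS
  have hSi : S i := Relation.ReflTransGen.refl
  have hSj : ¬ S j := hij
  have hcl : ∀ e, Sum.inl e ∈ B → (S (src e) ↔ S (tgt e)) := fun e he =>
    ⟨fun h => h.tail ⟨e, he, Or.inl ⟨rfl, rfl⟩⟩, fun h => h.tail ⟨e, he, Or.inr ⟨rfl, rfl⟩⟩⟩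
  let L := (nodeSum m p S).prod (nodeSum m p fun x => ¬ S x)
  have hsurj : LinearMap.range L = ⊤ := by
    rw [LinearMap.range_eq_top]
    rintro ⟨a, b⟩
    refine ⟨Sum.elim (fun x => if x = i then a else if x = j then b else 0) 0, ?_⟩
    have hne : i ≠ j := fun h => hSj (h ▸ hSi)
    have e1 : ∀ x, (if S x then (if x = i then a else if x = j then b else 0) else 0)
        = if x = i then a else 0 := by
      intro x
      by_cases hx : x = i
      · subst hx; simp [hSi]
      · by_cases hx' : x = j
        · subst hx'; simp [hSj, hx]
        · simp [hx, hx']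
    have e2 : ∀ x, (if ¬ S x then (if x = i then a else if x = j then b else 0) else 0)
        = if x = j then b else 0 := by
      intro x
      by_cases hx : x = i
      · subst hx; simp [hSi, hne]
      · by_cases hx' : x = j
        · subst hx'; simp [hSj, hx]
        · simp [hx, hx']
    refine Prod.ext ?_ ?_
    · simp only [L, LinearMap.prod_apply, Function.prod, nodeSum, LinearMap.coe_mk, AddHom.coe_mk,
        Sum.elim_inl]
      rw [Finset.sum_congr rfl fun x _ => e1 x]
      simp
    · simp only [L, LinearMap.prod_apply, Function.prod, nodeSum, LinearMap.coe_mk, AddHom.coe_mk,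
        Sum.elim_inl]
      rw [Finset.sum_congr rfl fun x _ => e2 x]
      simp
  have hdim := LinearMap.finrank_range_add_finrank_ker L
  rw [hsurj, finrank_top] at hdim
  simp only [Module.finrank_prod, Module.finrank_self, Module.finrank_fintype_fun_eq_card,
    Fintype.card_sum, Fintype.card_fin] at hdim
  have hle : Submodule.span ℝ (Set.range fun b : B =>
      (constraintMatrix m n p src tgt parent child α)ᵀ b.1) ≤ LinearMap.ker L := by
    rw [Submodule.span_le]
    rintro _ ⟨⟨b, hb⟩, rfl⟩
    refine Prod.ext ?_ ?_
    · exact nodeSum_col m n p src tgt hst parent child α S b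
        fun e he => hcl e (he ▸ hb)
    · exact nodeSum_col m n p src tgt hst parent child α (fun x => ¬ S x) b
        fun e he => not_congr (hcl e (he ▸ hb))
  have h1 := Submodule.finrank_mono hle
  rw [finrank_span_eq_card hBind, Fintype.card_coe] at h1
  omega
end
end

section
/- Let B be a set of m + p − 1 column indices of the constraint matrix A containing exactly r interdependent variables, and suppose the independent arcs contained in B form a spanning forest of G whose connected components are T_1, …, T_{r−p+1}. Then the columns of A indexed by B have rank m + p − 1 (equivalently, are linearly independent) if and only if the r×r matrix D associated with B and this forest is nonsingular. -/
open Matrix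

noncomputable section

/-- Undirected simple graph of a set of arcs. -/
def arcGraph (m n : ℕ) (src tgt : Fin n → Fin m) (P : Fin n → Prop) : SimpleGraph (Fin m) where
  Adj a b := a ≠ b ∧ ∃ e, P e ∧ ((src e = a ∧ tgt e = b) ∨ (src e = b ∧ tgt e = a))
  symm := ⟨fun a b h => ⟨h.1.symm, by
    obtain ⟨_, e, he, h⟩ := h
    exact ⟨e, he, h.symm⟩⟩⟩
  loopless := ⟨fun a h => h.1 rfl⟩

theorem exists_cycle_of_reachable (m n : ℕ) (src tgt : Fin n → Fin m) (P : Fin n → Prop)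
    (e : Fin n) (he : ¬ P e)
    (hr : (arcGraph m n src tgt P).Reachable (src e) (tgt e)) :
    ∃ (k : ℕ) (_ : 1 ≤ k) (f : Fin k → Fin n) (v : Fin (k + 1) → Fin m),
      Function.Injective f ∧ (∀ i, f i = e ∨ P (f i)) ∧
      v 0 = v (Fin.last k) ∧
      ∀ i : Fin k, ({src (f i), tgt (f i)} : Set (Fin m)) = {v i.castSucc, v i.succ} := by
  obtain ⟨w, hw⟩ := hr.exists_isPath
  have hadj : ∀ i, i < w.length → (arcGraph m n src tgt P).Adj (w.getVert i) (w.getVert (i+1)) :=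
    fun i hi => w.adj_getVert_succ hi
  have hinj := hw.getVert_injOn
  have hch : ∀ i : ℕ, ∃ a : Fin n, i < w.length → P a ∧
      ((src a = w.getVert i ∧ tgt a = w.getVert (i+1)) ∨
       (src a = w.getVert (i+1) ∧ tgt a = w.getVert i)) := by
    intro i
    by_cases hi : i < w.length
    · obtain ⟨_, a, ha⟩ := hadj i hi
      exact ⟨a, fun _ => ha⟩
    · exact ⟨e, fun h => absurd h hi⟩
  choose arc harc using hch
  have harcinj : ∀ i j, i < w.length → j < w.length → arc i = arc j → i = j := by
    intro i j hi hj hij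
    obtain ⟨_, h1⟩ := harc i hi
    obtain ⟨_, h2⟩ := harc j hj
    rw [← hij] at h2
    have key : ∀ a b, a ≤ w.length → b ≤ w.length → w.getVert a = w.getVert b → a = b :=
      fun a b ha hb h => hinj (by simpa using ha) (by simpa using hb) h
    rcases h1 with h1 | h1 <;> rcases h2 with h2 | h2
    · exact key i j (by omega) (by omega) (h1.1.symm.trans h2.1)
    · have a1 := key i (j+1) (by omega) (by omega) (h1.1.symm.trans h2.1)
      have a2 := key (i+1) j (by omega) (by omega) (h1.2.symm.trans h2.2)
      omega
    · have a1 := key (i+1) j (by omega) (by omega) (h1.1.symm.trans h2.1)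
      have a2 := key i (j+1) (by omega) (by omega) (h1.2.symm.trans h2.2)
      omega
    · exact key i j (by omega) (by omega) (h1.2.symm.trans h2.2)
  refine ⟨w.length + 1, by omega, fun i => if i.1 < w.length then arc i.1 else e,
    fun i => if i.1 ≤ w.length then w.getVert i.1 else src e, ?_, ?_, ?_, ?_⟩
  · intro i j hij
    dsimp only at hij
    have hi := i.2
    have hj := j.2
    apply Fin.ext
    split_ifs at hij with h1 h2 h2
    · exact harcinj _ _ h1 h2 hij
    · exact absurd (hij ▸ (harc _ h1).1) he
    · exact absurd (hij ▸ (harc _ h2).1) he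
    · omega
  · intro i
    dsimp only
    split_ifs with h
    · exact Or.inr (harc _ h).1
    · exact Or.inl rfl
  · simp
  · intro i
    have hi := i.2
    dsimp only
    by_cases h : i.1 < w.length
    · have h' : i.1 + 1 ≤ w.length := h
      simp only [h, h.le, h', Fin.val_castSucc, Fin.val_succ, if_true]
      rcases (harc _ h).2 with h2 | h2
      · rw [h2.1, h2.2]
      · rw [h2.1, h2.2, Set.pair_comm]
    · have h0 : i.1 = w.length := by omega
      simp [h0, Set.pair_comm]

/-- Sum of an incidence column over a set of nodes. -/
theorem sum_incidence (m n : ℕ) (src tgt : Fin n → Fin m) (hst : ∀ e, src e ≠ tgt e)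
    (e : Fin n) (f : Fin m → ℝ) :
    ∑ i, f i * incidenceMatrix m n src tgt i e = f (src e) - f (tgt e) := by
  have : ∀ i, f i * incidenceMatrix m n src tgt i e =
      (if src e = i then f i else 0) - (if tgt e = i then f i else 0) := by
    intro i
    have := hst e
    simp only [incidenceMatrix, Matrix.of_apply]
    split_ifs with h1 h2 h2
    · exact absurd (h1.trans h2.symm) this
    · simp
    · simp
    · simp
  simp [this]

theorem abstract_iff {ι κ M N : Type*} [AddCommGroup M] [Module ℝ M] [AddCommGroup N] [Module ℝ N]
    [Fintype κ] (u : ι → M) (v : κ → M) (Φ : M →ₗ[ℝ] N) (hu : LinearIndependent ℝ u)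
    (h0 : ∀ i, Φ (u i) = 0)
    (hker : ∀ x ∈ Submodule.span ℝ (Set.range v), Φ x = 0 → x ∈ Submodule.span ℝ (Set.range u)) :
    LinearIndependent ℝ (Sum.elim u v) ↔ LinearIndependent ℝ (Φ ∘ v) := by
  rw [linearIndependent_sum]
  simp only [Sum.elim_comp_inl, Sum.elim_comp_inr]
  constructor
  · rintro ⟨_, hv, hd⟩
    apply hv.map
    rw [Submodule.disjoint_def] at hd ⊢
    intro x hx hx0
    exact hd x (hker x hx hx0) hx
  · intro h
    refine ⟨hu, h.of_comp, ?_⟩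
    rw [Submodule.disjoint_def]
    intro x hx hxv
    have hx0 : Φ x = 0 := by
      have : Submodule.span ℝ (Set.range u) ≤ LinearMap.ker Φ := by
        rw [Submodule.span_le]
        rintro _ ⟨i, rfl⟩
        exact h0 i
      exact this hx
    obtain ⟨d, rfl⟩ := (Submodule.mem_span_range_iff_exists_fun ℝ).1 hxv
    have hd := Fintype.linearIndependent_iff.1 h d (by simpa using hx0)
    simp [hd]

/-- For a set `B` of `m + p − 1` columns of `A` containing exactly `r`
interdependent variables whose independent arcs form a spanning forest with components
`T_1, …, T_{r−p+1}`, the columns of `A` indexed by `B` are linearly independent iff the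
associated `r × r` matrix `D` is nonsingular (its columns are linearly independent). -/
theorem basis_iff_Dmat_nonsingular (m n p : ℕ) (src tgt : Fin n → Fin m) (hst : ∀ e, src e ≠ tgt e)
    (parent child : Fin p → Fin n) (α : Fin p → ℝ)
    (hpc : ∀ k k' : Fin p, parent k ≠ child k')
    (hpinj : Function.Injective parent) (hcinj : Function.Injective child)
    (B : Finset (Fin n ⊕ Fin p)) (hBcard : B.card = m + p - 1)
    (r : ℕ) (hpr : p ≤ r)
    (T : Fin (r - p + 1) → Finset (Fin m))
    (hTdisj : ∀ h h' : Fin (r - p + 1), h ≠ h' → Disjoint (T h) (T h'))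
    (hTne : ∀ h, (T h).Nonempty)
    (hforest : NoIndepCycle m n p src tgt parent child B)
    (hTcomp : ∀ i j : Fin m,
      indepReach m n p src tgt parent child B i j ↔ ∃ h, i ∈ T h ∧ j ∈ T h)
    (col : Fin r → Fin n ⊕ Fin p)
    (hcolinj : Function.Injective col)
    (hcolrange : ∀ j : Fin n ⊕ Fin p,
      j ∈ Set.range col ↔ j ∈ B ∧ interVar n p parent child j) :
    LinearIndependent ℝ (fun j : B =>
        (constraintMatrix m n p src tgt parent child α)ᵀ j.1) ↔
      LinearIndependent ℝ (fun j : Fin r =>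
        (Dmat m n p src tgt parent child α r T col)ᵀ j) := by
  classical
  set A := constraintMatrix m n p src tgt parent child α with hA
  let S := {e : Fin n // Sum.inl e ∈ B ∧ ¬ interVar n p parent child (Sum.inl e)}
  let u : S → (Fin m ⊕ Fin p → ℝ) := fun e => Aᵀ (Sum.inl e.1)
  let v : Fin r → (Fin m ⊕ Fin p → ℝ) := fun j => Aᵀ (col j)
  have hAl : ∀ i e, A (Sum.inl i) (Sum.inl e) = incidenceMatrix m n src tgt i e := fun _ _ => rfl
  have hAr : ∀ k e, A (Sum.inr k) (Sum.inl e) = interMatrix n p parent child α k e :=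
    fun _ _ => rfl
  have hAls : ∀ i k, A (Sum.inl i) (Sum.inr k) = 0 := fun _ _ => rfl
  have hArs : ∀ k k', A (Sum.inr k) (Sum.inr k') = if k = k' then (1 : ℝ) else 0 :=
    fun _ _ => rfl
  have hAS : ∀ (e : S) k, A (Sum.inr k) (Sum.inl e.1) = 0 := by
    intro e k
    have h := e.2.2
    simp only [interVar, not_exists, not_or] at h
    rw [hAr]
    simp [interMatrix, Ne.symm (h k).1, Ne.symm (h k).2]
  -- reindexing
  have hbij : ∃ φ : S ⊕ Fin r ≃ B, ∀ x, Aᵀ (φ x).1 = Sum.elim u v x := by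
    let f : S ⊕ Fin r → B := Sum.elim (fun e => ⟨Sum.inl e.1, e.2.1⟩)
      (fun j => ⟨col j, ((hcolrange _).1 ⟨j, rfl⟩).1⟩)
    have hf : Function.Bijective f := by
      constructor
      · rintro (a | a) (b | b) h
        · simp only [f, Sum.elim_inl, Subtype.mk.injEq, Sum.inl.injEq] at h
          exact congrArg _ (Subtype.ext h)
        · simp only [f, Sum.elim_inl, Sum.elim_inr, Subtype.mk.injEq] at h
          exact absurd (h ▸ ((hcolrange _).1 ⟨b, rfl⟩).2) a.2.2
        · simp only [f, Sum.elim_inl, Sum.elim_inr, Subtype.mk.injEq] at h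
          exact absurd (h ▸ ((hcolrange _).1 ⟨a, rfl⟩).2) b.2.2
        · simp only [f, Sum.elim_inr, Subtype.mk.injEq] at h
          exact congrArg _ (hcolinj h)
      · rintro ⟨b, hb⟩
        by_cases hi : interVar n p parent child b
        · obtain ⟨j, hj⟩ := (hcolrange b).2 ⟨hb, hi⟩
          exact ⟨Sum.inr j, Subtype.ext hj⟩
        · rcases b with e | k
          · exact ⟨Sum.inl ⟨e, hb, hi⟩, rfl⟩
          · exact absurd trivial hi
    refine ⟨Equiv.ofBijective f hf, ?_⟩
    rintro (a | a) <;> rfl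
  obtain ⟨φ, hφ⟩ := hbij
  let Φ : (Fin m ⊕ Fin p → ℝ) →ₗ[ℝ] (Fin (r - p) ⊕ Fin p → ℝ) :=
    LinearMap.pi (Sum.elim
      (fun h => ∑ i ∈ T h.castSucc, LinearMap.proj (Sum.inl i))
      (fun k => LinearMap.proj (Sum.inr k)))
  have hΦl : ∀ x h, Φ x (Sum.inl h) = ∑ i ∈ T h.castSucc, x (Sum.inl i) := by
    intro x h; simp [Φ]
  have hΦr : ∀ x k, Φ x (Sum.inr k) = x (Sum.inr k) := by
    intro x h; simp [Φ]
  have hsumT : ∀ (X : Finset (Fin m)) e, ∑ i ∈ X, incidenceMatrix m n src tgt i e =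
      deltaCoef m n src tgt e X := by
    intro X e
    have := sum_incidence m n src tgt hst e (fun i => if i ∈ X then 1 else 0)
    simp only [ite_mul, one_mul, zero_mul, Finset.sum_ite_mem, Finset.univ_inter] at this
    rw [this, deltaCoef]
    by_cases h1 : src e ∈ X <;> by_cases h2 : tgt e ∈ X <;> simp [h1, h2]
  have hreachS : ∀ e : S, indepReach m n p src tgt parent child B (src e.1) (tgt e.1) := by
    intro e
    exact Relation.ReflTransGen.single ⟨e.1, e.2.1, e.2.2, Or.inl ⟨rfl, rfl⟩⟩
  have huniq : ∀ i h h', i ∈ T h → i ∈ T h' → h = h' := by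
    intro i h h' h1 h2
    by_contra hne
    exact Finset.disjoint_left.1 (hTdisj h h' hne) h1 h2
  have h0 : ∀ e, Φ (u e) = 0 := by
    intro e
    ext (h | k)
    · rw [hΦl]
      simp only [u, Matrix.transpose_apply, hAl, hsumT, Pi.zero_apply]
      obtain ⟨h', h1, h2⟩ := (hTcomp _ _).1 (hreachS e)
      have : src e.1 ∈ T h.castSucc ↔ tgt e.1 ∈ T h.castSucc :=
        ⟨fun h3 => huniq _ _ _ h3 h1 ▸ h2, fun h3 => huniq _ _ _ h3 h2 ▸ h1⟩
      simp [deltaCoef, this]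
    · rw [hΦr]
      exact hAS e k
  have hD : (fun j : Fin r => (Dmat m n p src tgt parent child α r T col)ᵀ j) = Φ ∘ v := by
    funext j
    ext (h | k)
    · simp only [Function.comp, hΦl, v, Matrix.transpose_apply, Dmat, Matrix.of_apply]
      rcases col j with e | k
      · simp [hAl, hsumT]
      · simp [hAls]
    · simp only [Function.comp, hΦr, v, Matrix.transpose_apply, Dmat, Matrix.of_apply]
      rcases col j with e | k'
      · simp [hAr]
      · simp [hArs]
  -- independence of the forest columns
  have hu : LinearIndependent ℝ u := by
    rw [Fintype.linearIndependent_iff]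
    intro g hg e
    let P : Fin n → Prop := fun a => a ≠ e.1 ∧ Sum.inl a ∈ B ∧
      ¬ interVar n p parent child (Sum.inl a)
    have hnr : ¬ (arcGraph m n src tgt P).Reachable (src e.1) (tgt e.1) := by
      intro hr
      obtain ⟨k, hk, f, w, hf, hP, hw, hw'⟩ :=
        exists_cycle_of_reachable m n src tgt P e.1 (fun h => h.1 rfl) hr
      refine hforest ⟨k, hk, f, w, hf, ?_, ?_, hw, hw'⟩
      · intro i
        rcases hP i with h | h
        · rw [h]; exact e.2.2
        · exact h.2.2
      · intro i
        rcases hP i with h | h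
        · rw [h]; exact e.2.1
        · exact h.2.1
    let F : Fin m → ℝ := fun i => if (arcGraph m n src tgt P).Reachable (src e.1) i then 1 else 0
    have hF : ∀ a : S, ∑ i, F i * u a (Sum.inl i) = if a = e then 1 else 0 := by
      intro a
      have := sum_incidence m n src tgt hst a.1 F
      simp only [u, Matrix.transpose_apply, hAl, this]
      by_cases hae : a = e
      · subst hae
        simp [F, hnr]
      · have hadj : (arcGraph m n src tgt P).Adj (src a.1) (tgt a.1) :=
          ⟨hst _, a.1, ⟨fun h => hae (Subtype.ext h), a.2⟩, Or.inl ⟨rfl, rfl⟩⟩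
        have : (arcGraph m n src tgt P).Reachable (src e.1) (src a.1) ↔
            (arcGraph m n src tgt P).Reachable (src e.1) (tgt a.1) :=
          ⟨fun h => h.trans hadj.reachable, fun h => h.trans hadj.symm.reachable⟩
        simp [F, this, hae]
    have h1 : ∑ i, F i * (∑ a, g a • u a) (Sum.inl i) = 0 := by
      rw [hg]; simp
    simp only [Finset.sum_apply, Pi.smul_apply, smul_eq_mul, Finset.mul_sum] at h1
    rw [Finset.sum_comm] at h1
    have h2 : ∀ a, ∑ i, F i * (g a * u a (Sum.inl i)) = g a * if a = e then 1 else 0 := by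
      intro a
      rw [← hF a, Finset.mul_sum]
      exact Finset.sum_congr rfl fun i _ => by ring
    rw [Finset.sum_congr rfl (fun a _ => h2 a), Finset.sum_eq_single e
      (fun a _ hae => by rw [if_neg hae, mul_zero])
      (fun hh => absurd (Finset.mem_univ e) hh), if_pos rfl, mul_one] at h1
    exact h1
  -- kernel
  have hker : ∀ x ∈ Submodule.span ℝ (Set.range v), Φ x = 0 →
      x ∈ Submodule.span ℝ (Set.range u) := by
    intro x hx hx0
    have hsum0 : ∑ i, x (Sum.inl i) = 0 := by
      obtain ⟨d, rfl⟩ := (Submodule.mem_span_range_iff_exists_fun ℝ).1 hx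
      simp only [Finset.sum_apply, Pi.smul_apply, smul_eq_mul]
      rw [Finset.sum_comm]
      apply Finset.sum_eq_zero
      intro j _
      rw [← Finset.mul_sum]
      have : ∑ i, v j (Sum.inl i) = 0 := by
        simp only [v, Matrix.transpose_apply]
        rcases col j with e | k
        · have := sum_incidence m n src tgt hst e (fun _ => 1)
          simpa [hAl] using this
        · simp [hAls]
      rw [this, mul_zero]
    have hcomp : ∀ i, ∃ h, i ∈ T h := by
      intro i
      obtain ⟨h, h1, _⟩ := (hTcomp i i).1 Relation.ReflTransGen.refl
      exact ⟨h, h1⟩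
    choose c hc using hcomp
    have hTc : ∀ h, T h = Finset.univ.filter (fun i => c i = h) := by
      intro h
      ext i
      simp only [Finset.mem_filter, Finset.mem_univ, true_and]
      exact ⟨fun hi => huniq _ _ _ (hc i) hi, fun hi => hi ▸ hc i⟩
    have hTsum : ∀ h, ∑ i ∈ T h, x (Sum.inl i) = 0 := by
      have hcs : ∀ h : Fin (r - p), ∑ i ∈ T h.castSucc, x (Sum.inl i) = 0 := by
        intro h
        rw [← hΦl, hx0]; rfl
      have htot : ∑ h, ∑ i ∈ T h, x (Sum.inl i) = 0 := by
        rw [← hsum0]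
        simp only [hTc]
        exact Finset.sum_fiberwise _ _ _
      rw [Fin.sum_univ_castSucc] at htot
      simp only [hcs, Finset.sum_const_zero, zero_add] at htot
      intro h
      induction h using Fin.lastCases with
      | last => exact htot
      | cast h => exact hcs h
    choose rt hrt using hTne
    let b : Fin m → (Fin m ⊕ Fin p → ℝ) := fun i => Pi.single (Sum.inl i) 1
    have hbu : ∀ e : S, u e = b (src e.1) - b (tgt e.1) := by
      intro e
      have hne := hst e.1
      ext (i | k)
      · simp only [u, Matrix.transpose_apply, hAl, b, Pi.sub_apply, Pi.single_apply,
          Sum.inl.injEq, incidenceMatrix, Matrix.of_apply]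
        by_cases h1 : src e.1 = i
        · subst h1; simp [hne]
        · by_cases h2 : tgt e.1 = i
          · subst h2; simp [hne, hne.symm]
          · simp [h1, h2, Ne.symm h1, Ne.symm h2]
      · simp only [u, Matrix.transpose_apply, hAS]
        simp [b]
    have hreach : ∀ i j, indepReach m n p src tgt parent child B i j →
        b i - b j ∈ Submodule.span ℝ (Set.range u) := by
      intro i j hij
      induction hij with
      | refl => simp
      | tail _ hstep ih =>
        obtain ⟨e, he1, he2, h⟩ := hstep
        have hm : b (src e) - b (tgt e) ∈ Submodule.span ℝ (Set.range u) :=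
          hbu ⟨e, he1, he2⟩ ▸ Submodule.subset_span ⟨_, rfl⟩
        rcases h with ⟨rfl, rfl⟩ | ⟨rfl, rfl⟩
        · have := Submodule.add_mem _ ih hm
          simpa using this
        · have := Submodule.sub_mem _ ih hm
          simpa using this
    have hxeq : x = ∑ i, x (Sum.inl i) • (b i - b (rt (c i))) := by
      have hz : ∑ i, x (Sum.inl i) • b (rt (c i)) = 0 := by
        rw [← Finset.sum_fiberwise Finset.univ c]
        apply Finset.sum_eq_zero
        intro h _
        have : ∑ i with c i = h, x (Sum.inl i) • b (rt (c i)) =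
            (∑ i ∈ T h, x (Sum.inl i)) • b (rt h) := by
          rw [hTc, Finset.sum_smul]
          apply Finset.sum_congr rfl
          intro i hi
          rw [(Finset.mem_filter.1 hi).2]
        rw [this, hTsum, zero_smul]
      simp only [smul_sub, Finset.sum_sub_distrib, hz, sub_zero]
      ext (i | k)
      · simp [b, Pi.single_apply, Finset.sum_apply]
      · have : x (Sum.inr k) = 0 := by rw [← hΦr x k, hx0]; rfl
        simp [b, this, Finset.sum_apply]
    rw [hxeq]
    refine Submodule.sum_mem _ fun i _ => Submodule.smul_mem _ _ (hreach _ _ ?_)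
    exact (hTcomp _ _).2 ⟨c i, hc i, hrt _⟩
  rw [hD, ← abstract_iff u v Φ hu h0 hker, ← linearIndependent_equiv φ]
  have : ((fun j : B => Aᵀ j.1) ∘ φ) = Sum.elim u v := funext hφ
  rw [this]
end
end

section
/- Let B be a set of m + p − 1 column indices of A containing exactly r interdependent variables whose independent arcs form a spanning forest of G with components T_1, …, T_{r−p+1}, and let D be the associated r×r matrix. Let D̂ be the submatrix of D obtained by deleting, for every interdependence t whose slack variable is contained in B, both the column of that slack variable and the row of interdependence t (with a 0×0 matrix regarded as nonsingular). Then the columns of A indexed by B are linearly independent (i.e., have rank m + p − 1) if and only if D̂ is nonsingular. -/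
open Matrix

noncomputable section

lemma li_ext {ι κ M : Type*} [Fintype ι] [Fintype κ] [AddCommGroup M] [Module ℝ M]
    (f : κ → ι) (hf : Function.Injective f) (v : ι → M) :
    LinearIndependent ℝ (fun k => v (f k)) ↔
      ∀ g : ι → ℝ, (∀ j, j ∉ Set.range f → g j = 0) → ∑ j, g j • v j = 0 → ∀ j, g j = 0 := by
  classical
  have key : ∀ g : ι → ℝ, (∀ j, j ∉ Set.range f → g j = 0) →
      ∑ j, g j • v j = ∑ k, g (f k) • v (f k) := by
    intro g hg
    rw [← Finset.sum_image (s := Finset.univ) (g := f) (f := fun j => g j • v j)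
      (fun a _ b _ h => hf h)]
    symm
    apply Finset.sum_subset (Finset.subset_univ _)
    intro j _ hj
    rw [hg j (by simpa using hj), zero_smul]
  rw [Fintype.linearIndependent_iff]
  constructor
  · intro h g hg hs j
    by_cases hj : j ∈ Set.range f
    · obtain ⟨k, rfl⟩ := hj
      exact h (fun k => g (f k)) (by rw [← key g hg]; exact hs) k
    · exact hg j hj
  · intro h g hs k
    have e : ∀ k, Function.extend f g 0 (f k) = g k := fun k => hf.extend_apply g 0 k
    have z : ∀ j, j ∉ Set.range f → Function.extend f g 0 j = 0 := fun j hj => by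
      rw [Function.extend_apply' _ _ _ (by simpa using hj)]; rfl
    have := h (Function.extend f g 0) z (by rw [key _ z]; simpa only [e] using hs) (f k)
    rwa [e] at this

lemma incidence_col (m n : ℕ) (src tgt : Fin n → Fin m) (hst : ∀ e, src e ≠ tgt e) (e : Fin n) :
    (incidenceMatrix m n src tgt)ᵀ e = Pi.single (src e) (1 : ℝ) - Pi.single (tgt e) 1 := by
  funext i
  have := hst e
  simp only [incidenceMatrix, Matrix.transpose_apply, Matrix.of_apply, Pi.sub_apply,
    Pi.single_apply]
  by_cases h1 : src e = i <;> by_cases h2 : tgt e = i <;> simp_all [eq_comm]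

lemma delta_eq (m n : ℕ) (src tgt : Fin n → Fin m) (hst : ∀ e, src e ≠ tgt e) (e : Fin n)
    (T : Finset (Fin m)) :
    deltaCoef m n src tgt e T = ∑ i ∈ T, incidenceMatrix m n src tgt i e := by
  have : ∀ i, incidenceMatrix m n src tgt i e
      = (Pi.single (src e) (1 : ℝ) : Fin m → ℝ) i - (Pi.single (tgt e) (1 : ℝ) : Fin m → ℝ) i :=
    fun i => congrFun (incidence_col m n src tgt hst e) i
  simp only [this, Finset.sum_sub_distrib, Pi.single_apply, Finset.sum_ite_eq', deltaCoef]
  by_cases h1 : src e ∈ T <;> by_cases h2 : tgt e ∈ T <;> simp [h1, h2]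

lemma span_of_sum_zero (m n p : ℕ) (src tgt : Fin n → Fin m) (hst : ∀ e, src e ≠ tgt e)
    (parent child : Fin p → Fin n) (B : Finset (Fin n ⊕ Fin p)) (c : ℕ)
    (T : Fin c → Finset (Fin m))
    (hTdisj : ∀ h h' : Fin c, h ≠ h' → Disjoint (T h) (T h'))
    (hTne : ∀ h, (T h).Nonempty)
    (hTcomp : ∀ i j : Fin m,
      indepReach m n p src tgt parent child B i j ↔ ∃ h, i ∈ T h ∧ j ∈ T h)
    (b : Fin m → ℝ) (hb : ∀ h, ∑ i ∈ T h, b i = 0) :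
    b ∈ Submodule.span ℝ (Set.range
      (fun e : {e : Fin n // Sum.inl e ∈ B ∧ ¬ interVar n p parent child (Sum.inl e)} =>
        (incidenceMatrix m n src tgt)ᵀ e.1)) := by
  classical
  set W := Submodule.span ℝ (Set.range
      (fun e : {e : Fin n // Sum.inl e ∈ B ∧ ¬ interVar n p parent child (Sum.inl e)} =>
        (incidenceMatrix m n src tgt)ᵀ e.1)) with hW
  have hreach : ∀ i j, indepReach m n p src tgt parent child B i j →
      (Pi.single i (1 : ℝ) - Pi.single j 1 : Fin m → ℝ) ∈ W := by
    intro i j h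
    induction h with
    | refl => simp
    | @tail x y _ h2 ih =>
      obtain ⟨e, he, hi, h⟩ := h2
      have hm : (incidenceMatrix m n src tgt)ᵀ e ∈ W := Submodule.subset_span ⟨⟨e, he, hi⟩, rfl⟩
      rw [incidence_col m n src tgt hst] at hm
      rcases h with ⟨rfl, rfl⟩ | ⟨rfl, rfl⟩
      · have := W.add_mem ih hm
        rwa [sub_add_sub_cancel] at this
      · have := W.sub_mem ih hm
        rwa [sub_sub_sub_cancel_right] at this
  have hcov : ∀ i, ∃ h, i ∈ T h := fun i => by
    obtain ⟨h, h1, _⟩ := (hTcomp i i).1 Relation.ReflTransGen.refl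
    exact ⟨h, h1⟩
  choose hh hhm using hcov
  choose q hq using hTne
  have hmem : ∀ i h, i ∈ T h ↔ hh i = h := by
    intro i h
    constructor
    · intro hi
      by_contra hne
      exact Finset.disjoint_left.1 (hTdisj _ _ hne) (hhm i) hi
    · rintro rfl; exact hhm i
  have e1 : b = ∑ i, b i • (Pi.single i (1 : ℝ) - Pi.single (q (hh i)) 1 : Fin m → ℝ) := by
    have e2 : ∑ i, b i • (Pi.single (q (hh i)) (1 : ℝ) : Fin m → ℝ) = 0 := by
      rw [← Finset.sum_fiberwise (s := Finset.univ) (g := hh)]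
      apply Finset.sum_eq_zero
      intro h _
      have : Finset.univ.filter (fun i => hh i = h) = T h := by
        ext i; simp [hmem]
      rw [this, Finset.sum_congr rfl (g := fun i => b i • (Pi.single (q h) (1 : ℝ) : Fin m → ℝ))
        (fun i hi => by rw [(hmem i h).1 hi]), ← Finset.sum_smul, hb, zero_smul]
    simp only [smul_sub, Finset.sum_sub_distrib, e2, sub_zero]
    funext j
    simp [Finset.sum_apply, Pi.single_apply]
  rw [e1]
  exact W.sum_mem fun i _ => W.smul_mem _ (hreach _ _ ((hTcomp _ _).2 ⟨hh i, hhm i, hq _⟩))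

lemma forest_indep (m n p : ℕ) (src tgt : Fin n → Fin m) (hst : ∀ e, src e ≠ tgt e)
    (parent child : Fin p → Fin n) (B : Finset (Fin n ⊕ Fin p)) (c : ℕ)
    (T : Fin c → Finset (Fin m))
    (hTdisj : ∀ h h' : Fin c, h ≠ h' → Disjoint (T h) (T h'))
    (hTne : ∀ h, (T h).Nonempty)
    (hTcomp : ∀ i j : Fin m,
      indepReach m n p src tgt parent child B i j ↔ ∃ h, i ∈ T h ∧ j ∈ T h)
    (hcard : Nat.card {e : Fin n // Sum.inl e ∈ B ∧ ¬ interVar n p parent child (Sum.inl e)} + c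
      ≤ m) :
    LinearIndependent ℝ
      (fun e : {e : Fin n // Sum.inl e ∈ B ∧ ¬ interVar n p parent child (Sum.inl e)} =>
        (incidenceMatrix m n src tgt)ᵀ e.1) := by
  classical
  rw [linearIndependent_iff_card_le_finrank_span, Set.finrank]
  let L : (Fin m → ℝ) →ₗ[ℝ] (Fin c → ℝ) :=
    LinearMap.pi fun h => ∑ i ∈ T h, LinearMap.proj i
  have hle : LinearMap.ker L ≤ Submodule.span ℝ (Set.range
      (fun e : {e : Fin n // Sum.inl e ∈ B ∧ ¬ interVar n p parent child (Sum.inl e)} =>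
        (incidenceMatrix m n src tgt)ᵀ e.1)) := by
    intro b hb
    apply span_of_sum_zero m n p src tgt hst parent child B c T hTdisj hTne hTcomp
    intro h
    have := congrFun (LinearMap.mem_ker.1 hb) h
    simpa [L, LinearMap.sum_apply] using this
  have h1 := Submodule.finrank_mono hle
  have h2 := L.finrank_range_add_finrank_ker
  have h3 := (LinearMap.range L).finrank_le
  simp only [Module.finrank_fin_fun] at h2 h3
  rw [← Nat.card_eq_fintype_card]
  omega

/-- The columns of `A` indexed by `B` are linearly independent iff the
reduced matrix `D̂`, obtained from `D` by deleting the column of every basic slack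
variable and the row of the corresponding interdependence, is nonsingular. -/
theorem basis_iff_Dhat_nonsingular (m n p : ℕ) (src tgt : Fin n → Fin m) (hst : ∀ e, src e ≠ tgt e)
    (parent child : Fin p → Fin n) (α : Fin p → ℝ)
    (hpc : ∀ k k' : Fin p, parent k ≠ child k')
    (hpinj : Function.Injective parent) (hcinj : Function.Injective child)
    (B : Finset (Fin n ⊕ Fin p)) (hBcard : B.card = m + p - 1)
    (r : ℕ) (hpr : p ≤ r)
    (T : Fin (r - p + 1) → Finset (Fin m))
    (hTdisj : ∀ h h' : Fin (r - p + 1), h ≠ h' → Disjoint (T h) (T h'))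
    (hTne : ∀ h, (T h).Nonempty)
    (hforest : NoIndepCycle m n p src tgt parent child B)
    (hTcomp : ∀ i j : Fin m,
      indepReach m n p src tgt parent child B i j ↔ ∃ h, i ∈ T h ∧ j ∈ T h)
    (col : Fin r → Fin n ⊕ Fin p)
    (hcolinj : Function.Injective col)
    (hcolrange : ∀ j : Fin n ⊕ Fin p,
      j ∈ Set.range col ↔ j ∈ B ∧ interVar n p parent child j) :
    LinearIndependent ℝ (fun j : B =>
        (constraintMatrix m n p src tgt parent child α)ᵀ j.1) ↔
      LinearIndependent ℝ
        (fun j : {j : Fin r // ∀ k : Fin p, col j ≠ Sum.inr k} =>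
          fun i : {i : Fin (r - p) ⊕ Fin p //
              ∀ k : Fin p, i = Sum.inr k → (Sum.inr k : Fin n ⊕ Fin p) ∉ B} =>
            Dmat m n p src tgt parent child α r T col i.1 j.1) := by
  classical
  -- membership in the components
  have hcov : ∀ i, ∃ h, i ∈ T h := fun i => by
    obtain ⟨h, h1, _⟩ := (hTcomp i i).1 Relation.ReflTransGen.refl
    exact ⟨h, h1⟩
  have hcn : Nat.card {e : Fin n // Sum.inl e ∈ B ∧ ¬ interVar n p parent child (Sum.inl e)}
      + (r - p + 1) ≤ m := by
    have hm : 0 < m := by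
      obtain ⟨i, _⟩ := hTne 0
      exact i.pos
    have h1 : (B.filter (fun j => interVar n p parent child j)).card = r := by
      have : B.filter (fun j => interVar n p parent child j) = Finset.univ.image col := by
        ext j
        have := hcolrange j
        simp only [Finset.mem_filter, Finset.mem_image, Finset.mem_univ, true_and]
        exact this.symm
      rw [this, Finset.card_image_of_injective _ hcolinj, Finset.card_univ, Fintype.card_fin]
    have h2 := Finset.card_filter_add_card_filter_not (s := B)
      (fun j => interVar n p parent child j)
    have h3 : Nat.card {e : Fin n // Sum.inl e ∈ B ∧ ¬ interVar n p parent child (Sum.inl e)}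
        ≤ (B.filter (fun j => ¬ interVar n p parent child j)).card := by
      rw [Nat.card_eq_fintype_card, ← Fintype.card_coe]
      refine Fintype.card_le_of_injective
        (fun e => ⟨Sum.inl e.1, by simpa using e.2⟩) ?_
      intro a b hab
      simpa [Subtype.ext_iff] using hab
    have h4 : r - p + 1 ≤ m := by
      choose q hq using hTne
      have : Function.Injective q := by
        intro a b hab
        by_contra hne
        exact Finset.disjoint_left.1 (hTdisj _ _ hne) (hq a) (hab ▸ hq b)
      simpa using Fintype.card_le_of_injective q this
    omega
  have hFind := forest_indep m n p src tgt hst parent child B _ T hTdisj hTne hTcomp hcn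
  have hFspan := span_of_sum_zero m n p src tgt hst parent child B _ T hTdisj hTne hTcomp
  -- independent arcs stay inside components
  have hdelta0 : ∀ e, Sum.inl e ∈ B → ¬ interVar n p parent child (Sum.inl e) → ∀ h,
      deltaCoef m n src tgt e (T h) = 0 := by
    intro e he hi h
    obtain ⟨h', h1, h2⟩ := (hTcomp (src e) (tgt e)).1
      (Relation.ReflTransGen.single ⟨e, he, hi, Or.inl ⟨rfl, rfl⟩⟩)
    by_cases hh : h = h'
    · subst hh; simp [deltaCoef, h1, h2]
    · have a1 : src e ∉ T h := fun h3 => Finset.disjoint_left.1 (hTdisj _ _ hh) h3 h1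
      have a2 : tgt e ∉ T h := fun h3 => Finset.disjoint_left.1 (hTdisj _ _ hh) h3 h2
      simp [deltaCoef, a1, a2]
  have hQ0 : ∀ e, ¬ interVar n p parent child (Sum.inl e) → ∀ k,
      interMatrix n p parent child α k e = 0 := by
    intro e hi k
    have h1 : e ≠ parent k := fun h => hi ⟨k, Or.inl h.symm⟩
    have h2 : e ≠ child k := fun h => hi ⟨k, Or.inr h.symm⟩
    simp [interMatrix, h1, h2]
  have hdsum : ∀ (y : Fin n → ℝ) (h : Fin (r - p + 1)),
      ∑ e, y e * deltaCoef m n src tgt e (T h)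
        = ∑ i ∈ T h, ∑ e, y e * incidenceMatrix m n src tgt i e := by
    intro y h
    rw [Finset.sum_comm]
    refine Finset.sum_congr rfl fun e _ => ?_
    rw [delta_eq m n src tgt hst, Finset.mul_sum]
  -- reformulate the left side
  have hL := li_ext (fun j : B => j.1) Subtype.val_injective
    (fun j => (constraintMatrix m n p src tgt parent child α)ᵀ j)
  rw [hL]
  -- reformulate the right side
  have hex : ∀ j : {j : Fin r // ∀ k : Fin p, col j ≠ Sum.inr k}, ∃ e, col j.1 = Sum.inl e := by
    rintro ⟨j, hj⟩
    cases hc : col j with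
    | inl e => exact ⟨e, rfl⟩
    | inr k => exact absurd hc (hj k)
  choose f hf using hex
  have hfinj : Function.Injective f := by
    intro a b hab
    apply Subtype.ext
    apply hcolinj
    rw [hf, hf, hab]
  have hfr : ∀ e, e ∈ Set.range f ↔ Sum.inl e ∈ B ∧ interVar n p parent child (Sum.inl e) := by
    intro e
    rw [← hcolrange]
    constructor
    · rintro ⟨j, rfl⟩
      exact ⟨j.1, hf j⟩
    · rintro ⟨j, hj⟩
      refine ⟨⟨j, fun k => by rw [hj]; simp⟩, ?_⟩
      have := hf ⟨j, fun k => by rw [hj]; simp⟩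
      exact (Sum.inl_injective (hj.symm.trans this)).symm
  let v : Fin n → ({i : Fin (r - p) ⊕ Fin p //
              ∀ k : Fin p, i = Sum.inr k → (Sum.inr k : Fin n ⊕ Fin p) ∉ B} → ℝ) :=
    fun e i => Sum.elim (fun h : Fin (r - p) => deltaCoef m n src tgt e (T h.castSucc))
      (fun k => interMatrix n p parent child α k e) i.1
  have hv : (fun j : {j : Fin r // ∀ k : Fin p, col j ≠ Sum.inr k} =>
          fun i : {i : Fin (r - p) ⊕ Fin p //
              ∀ k : Fin p, i = Sum.inr k → (Sum.inr k : Fin n ⊕ Fin p) ∉ B} =>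
            Dmat m n p src tgt parent child α r T col i.1 j.1) = fun j => v (f j) := by
    funext j i
    obtain ⟨i, hi⟩ := i
    simp only [Dmat, Matrix.of_apply, hf, v]
    cases i <;> rfl
  rw [hv, li_ext f hfinj v]
  have hLeq : ∀ g : Fin n ⊕ Fin p → ℝ,
      ∑ j, g j • (constraintMatrix m n p src tgt parent child α)ᵀ j = 0 ↔
      (∀ i, ∑ e, g (Sum.inl e) * incidenceMatrix m n src tgt i e = 0) ∧
      (∀ k, ∑ e, g (Sum.inl e) * interMatrix n p parent child α k e + g (Sum.inr k) = 0) := by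
    intro g
    rw [funext_iff, Sum.forall]
    simp [constraintMatrix, Finset.sum_apply, Matrix.one_apply]
  have hReq : ∀ y : Fin n → ℝ, ∑ e, y e • v e = 0 ↔
      (∀ h : Fin (r - p), ∑ e, y e * deltaCoef m n src tgt e (T h.castSucc) = 0) ∧
      (∀ k, (Sum.inr k : Fin n ⊕ Fin p) ∉ B →
        ∑ e, y e * interMatrix n p parent child α k e = 0) := by
    intro y
    rw [funext_iff, Subtype.forall, Sum.forall]
    simp [v, Finset.sum_apply]
  constructor
  · intro h y hy hs
    rw [hReq] at hs
    obtain ⟨hs1, hs2⟩ := hs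
    -- all component sums vanish
    have hall : ∀ h, ∑ i ∈ T h, ∑ e, y e * incidenceMatrix m n src tgt i e = 0 := by
      have htot : ∑ h, ∑ i ∈ T h, ∑ e, y e * incidenceMatrix m n src tgt i e = 0 := by
        rw [← Finset.sum_biUnion (fun a _ b _ hab => hTdisj a b hab)]
        have hu : Finset.univ.biUnion T = Finset.univ := by
          ext i; simpa using hcov i
        rw [hu, Finset.sum_comm]
        refine Finset.sum_eq_zero fun e _ => ?_
        rw [← Finset.mul_sum, ← delta_eq m n src tgt hst]
        simp [deltaCoef]
      rw [Fin.sum_univ_castSucc, Finset.sum_eq_zero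
        (fun h _ => by rw [← hdsum, hs1]), zero_add] at htot
      intro h
      induction h using Fin.lastCases with
      | last => exact htot
      | cast h => rw [← hdsum, hs1]
    have hmem := hFspan (fun i => ∑ e, y e * incidenceMatrix m n src tgt i e) hall
    rw [Submodule.mem_span_range_iff_exists_fun] at hmem
    obtain ⟨w, hw⟩ := hmem
    have hwi : ∀ i, ∑ e, Function.extend Subtype.val w (0 : Fin n → ℝ) e
          * incidenceMatrix m n src tgt i e
        = ∑ e, y e * incidenceMatrix m n src tgt i e := by
      intro i
      rw [← congrFun hw i, Finset.sum_apply]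
      symm
      apply Fintype.sum_of_injective Subtype.val Subtype.val_injective
      · intro e he
        rw [Function.extend_apply' _ _ _ (by simpa using he)]; simp
      · intro e
        rw [Subtype.val_injective.extend_apply]; rfl
    set W := Function.extend Subtype.val w (0 : Fin n → ℝ) with hWdef
    have hW0 : ∀ e, ¬ (Sum.inl e ∈ B ∧ ¬ interVar n p parent child (Sum.inl e)) → W e = 0 := by
      intro e he
      rw [hWdef, Function.extend_apply' _ _ _ (by simpa using he)]; rfl
    have hWQ : ∀ k e, W e * interMatrix n p parent child α k e = 0 := by
      intro k e
      by_cases hi : interVar n p parent child (Sum.inl e)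
      · rw [hW0 e (fun h => h.2 hi), zero_mul]
      · rw [hQ0 e hi, mul_zero]
    have hz := h (Sum.elim (fun e => y e - W e)
      (fun k => - ∑ e, y e * interMatrix n p parent child α k e)) ?_ ?_
    · intro e
      by_cases hi : interVar n p parent child (Sum.inl e)
      · have h1 := hz (Sum.inl e)
        have h2 := hW0 e (fun h => h.2 hi)
        simpa [h2] using h1
      · exact hy e (fun h => hi ((hfr e).1 h).2)
    · rintro (e | k) hj
      · have hj' : Sum.inl e ∉ B := by simpa using hj
        have h1 := hy e (fun h => hj' ((hfr e).1 h).1)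
        have h2 := hW0 e (fun h => hj' h.1)
        simp [h1, h2]
      · have hj' : (Sum.inr k : Fin n ⊕ Fin p) ∉ B := by simpa using hj
        simp [hs2 k hj']
    · rw [hLeq]
      constructor
      · intro i
        simp only [Sum.elim_inl, sub_mul, Finset.sum_sub_distrib, hwi, sub_self]
      · intro k
        simp only [Sum.elim_inl, Sum.elim_inr, sub_mul, hWQ, sub_zero, add_neg_cancel]
  · intro h g hg hs
    rw [hLeq] at hs
    obtain ⟨hs1, hs2⟩ := hs
    have hgB : ∀ j, j ∉ B → g j = 0 := fun j hj => hg j (by simpa using hj)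
    have hyQ : ∀ k e, (if interVar n p parent child (Sum.inl e) then g (Sum.inl e) else 0)
        * interMatrix n p parent child α k e
        = g (Sum.inl e) * interMatrix n p parent child α k e := by
      intro k e
      split_ifs with hi
      · rfl
      · rw [hQ0 e hi]; simp
    have hy := h (fun e => if interVar n p parent child (Sum.inl e) then g (Sum.inl e) else 0)
      ?_ ?_
    · have hgi : ∀ e, interVar n p parent child (Sum.inl e) → g (Sum.inl e) = 0 := by
        intro e hi
        have := hy e
        simpa [hi] using this
      have hslack : ∀ k, g (Sum.inr k) = 0 := by
        intro k
        have h1 := hs2 k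
        rw [Finset.sum_eq_zero, zero_add] at h1
        · exact h1
        · intro e _
          rw [← hyQ, hy e, zero_mul]
      have hF := (li_ext Subtype.val Subtype.val_injective
        (fun e => (incidenceMatrix m n src tgt)ᵀ e)).1 hFind (fun e => g (Sum.inl e)) ?_ ?_
      · rintro (e | k)
        · exact hF e
        · exact hslack k
      · intro e he
        by_cases hi : interVar n p parent child (Sum.inl e)
        · exact hgi e hi
        · exact hgB _ (fun hb => he ⟨⟨e, hb, hi⟩, rfl⟩)
      · funext i
        simpa [Finset.sum_apply] using hs1 i
    · intro e he
      split_ifs with hi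
      · exact hgB _ (fun hb => he ((hfr e).2 ⟨hb, hi⟩))
      · rfl
    · rw [hReq]
      constructor
      · intro t
        have h1 : ∑ e, g (Sum.inl e) * deltaCoef m n src tgt e (T t.castSucc) = 0 := by
          rw [hdsum (fun e => g (Sum.inl e))]
          exact Finset.sum_eq_zero fun i _ => hs1 i
        refine Eq.trans ?_ h1
        refine Finset.sum_congr rfl fun e _ => ?_
        split_ifs with hi
        · rfl
        · by_cases hb : Sum.inl e ∈ B
          · rw [hdelta0 e hb hi]; simp
          · rw [hgB _ hb]
      · intro k hk
        have h1 := hs2 k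
        rw [hgB _ hk, add_zero] at h1
        refine Eq.trans ?_ h1
        exact Finset.sum_congr rfl fun e _ => hyQ k e
end
end

section
/- Let B be a set of m + p − 1 column indices of A containing exactly r interdependent variables whose independent arcs form a spanning forest of G with components T_1, …, T_{r−p+1}, let D be the associated r×r matrix, and let D̂ be the submatrix of D obtained by deleting, for every interdependence t whose slack variable is contained in B, both the column of that slack variable and the row of interdependence t. Assume D is nonsingular, and let w ∈ ℝ^r be a vector (indexed like the columns of D) whose component is 0 for every slack variable contained in B. Then the unique solution σ of Dᵀσ = w satisfies σ_t = 0 for every interdependence t whose slack variable is contained in B, and the restriction of σ to the remaining components (those indexed by the rows of D that survive in D̂, i.e., the trees T_1,…,T_{r−p} and the interdependencies without a basic slack) is the unique solution σ̂ of D̂ᵀσ̂ = ŵ, where ŵ is the restriction of w to the columns of D̂. -/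
open Matrix

noncomputable section

/-- If `D` is nonsingular and `w` vanishes on the columns of basic
slack variables, then the solution `σ` of `Dᵀ σ = w` vanishes on the rows of basic
slacks, and its restriction to the surviving rows is the unique solution of
`D̂ᵀ σ̂ = ŵ`. -/
theorem Dhat_system_solution (m n p : ℕ) (src tgt : Fin n → Fin m) (hst : ∀ e, src e ≠ tgt e)
    (parent child : Fin p → Fin n) (α : Fin p → ℝ)
    (hpc : ∀ k k' : Fin p, parent k ≠ child k')
    (hpinj : Function.Injective parent) (hcinj : Function.Injective child)
    (B : Finset (Fin n ⊕ Fin p)) (hBcard : B.card = m + p - 1)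
    (r : ℕ) (hpr : p ≤ r)
    (T : Fin (r - p + 1) → Finset (Fin m))
    (hTdisj : ∀ h h' : Fin (r - p + 1), h ≠ h' → Disjoint (T h) (T h'))
    (hTne : ∀ h, (T h).Nonempty)
    (hforest : NoIndepCycle m n p src tgt parent child B)
    (hTcomp : ∀ i j : Fin m,
      indepReach m n p src tgt parent child B i j ↔ ∃ h, i ∈ T h ∧ j ∈ T h)
    (col : Fin r → Fin n ⊕ Fin p)
    (hcolinj : Function.Injective col)
    (hcolrange : ∀ j : Fin n ⊕ Fin p,
      j ∈ Set.range col ↔ j ∈ B ∧ interVar n p parent child j)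
    (hD : LinearIndependent ℝ (fun j : Fin r =>
      (Dmat m n p src tgt parent child α r T col)ᵀ j))
    (w : Fin r → ℝ)
    (hw : ∀ j : Fin r, (∃ k : Fin p, col j = Sum.inr k) → w j = 0)
    (σ : Fin (r - p) ⊕ Fin p → ℝ)
    (hσ : (Dmat m n p src tgt parent child α r T col)ᵀ.mulVec σ = w) :
    (∀ k : Fin p, Sum.inr k ∈ B → σ (Sum.inr k) = 0) ∧
    ∀ σhat : {i : Fin (r - p) ⊕ Fin p //
        ∀ k : Fin p, i = Sum.inr k → (Sum.inr k : Fin n ⊕ Fin p) ∉ B} → ℝ,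
      ((Matrix.of fun (i : {i : Fin (r - p) ⊕ Fin p //
            ∀ k : Fin p, i = Sum.inr k → (Sum.inr k : Fin n ⊕ Fin p) ∉ B})
          (j : {j : Fin r // ∀ k : Fin p, col j ≠ Sum.inr k}) =>
          Dmat m n p src tgt parent child α r T col i.1 j.1)ᵀ.mulVec σhat
        = fun j : {j : Fin r // ∀ k : Fin p, col j ≠ Sum.inr k} => w j.1)
      ↔ σhat = fun i => σ i.1 := by
  classical
  set D := Dmat m n p src tgt parent child α r T col with hDdef
  -- injectivity of `Dᵀ`
  have hinj : Function.Injective Dᵀ.mulVec := by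
    have hcard : Fintype.card (Fin r) = Fintype.card (Fin (r - p) ⊕ Fin p) := by
      simp; omega
    let q : Fin r ≃ (Fin (r - p) ⊕ Fin p) := Fintype.equivOfCardEq hcard
    have h1 : LinearIndependent ℝ (Dᵀ.submatrix id q).row := by
      have := hD.map' (LinearEquiv.funCongrLeft ℝ ℝ q).toLinearMap (LinearEquiv.ker _)
      exact this
    have h2 : IsUnit (Dᵀ.submatrix id q) := Matrix.linearIndependent_rows_iff_isUnit.mp h1
    have h3 := Matrix.mulVec_injective_of_isUnit h2
    intro x y hxy
    have h4 : (Dᵀ.submatrix id q).mulVec (x ∘ q) = (Dᵀ.submatrix id q).mulVec (y ∘ q) := by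
      rw [Matrix.submatrix_mulVec_equiv, Matrix.submatrix_mulVec_equiv]
      have hx : (x ∘ q) ∘ q.symm = x := by ext i; simp
      have hy : (y ∘ q) ∘ q.symm = y := by ext i; simp
      rw [hx, hy]
      exact congrArg (fun f => f ∘ id) hxy
    have h5 := h3 h4
    ext i
    have := congrFun h5 (q.symm i)
    simpa using this
  -- the equation belonging to a slack column
  have hslack : ∀ (τ : Fin (r - p) ⊕ Fin p → ℝ) (j : Fin r) (k : Fin p),
      col j = Sum.inr k → Dᵀ.mulVec τ j = τ (Sum.inr k) := by
    intro τ j k hj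
    simp [Matrix.mulVec, dotProduct, hDdef, Dmat, hj]
  have hcolB : ∀ k : Fin p, Sum.inr k ∈ B → ∃ j, col j = Sum.inr k := fun k hk =>
    (hcolrange (Sum.inr k)).mpr ⟨hk, trivial⟩
  have hBcol : ∀ (j : Fin r) (k : Fin p), col j = Sum.inr k → Sum.inr k ∈ B := fun j k hj =>
    ((hcolrange (Sum.inr k)).mp ⟨j, hj⟩).1
  have hzero : ∀ k : Fin p, Sum.inr k ∈ B → σ (Sum.inr k) = 0 := by
    intro k hk
    obtain ⟨j, hj⟩ := hcolB k hk
    rw [← hslack σ j k hj, hσ]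
    exact hw j ⟨k, hj⟩
  refine ⟨hzero, ?_⟩
  -- restricting the sum
  have hres : ∀ (τ : Fin (r - p) ⊕ Fin p → ℝ), (∀ k : Fin p, Sum.inr k ∈ B → τ (Sum.inr k) = 0) →
      ∀ j : {j : Fin r // ∀ k : Fin p, col j ≠ Sum.inr k},
      (Matrix.of fun (i : {i : Fin (r - p) ⊕ Fin p //
            ∀ k : Fin p, i = Sum.inr k → (Sum.inr k : Fin n ⊕ Fin p) ∉ B})
          (j : {j : Fin r // ∀ k : Fin p, col j ≠ Sum.inr k}) => D i.1 j.1)ᵀ.mulVec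
          (fun i => τ i.1) j = Dᵀ.mulVec τ j.1 := by
    intro τ hτ j
    simp only [Matrix.mulVec, dotProduct, Matrix.transpose_apply, Matrix.of_apply]
    rw [← Fintype.sum_subtype_add_sum_subtype
      (fun i : Fin (r - p) ⊕ Fin p =>
        ∀ k : Fin p, i = Sum.inr k → (Sum.inr k : Fin n ⊕ Fin p) ∉ B) (fun i => D i j.1 * τ i)]
    have h0 : ∑ i : {i : Fin (r - p) ⊕ Fin p //
        ¬ ∀ k : Fin p, i = Sum.inr k → (Sum.inr k : Fin n ⊕ Fin p) ∉ B},
        D i.1 j.1 * τ i.1 = 0 := by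
      refine Finset.sum_eq_zero fun i _ => ?_
      obtain ⟨i, hi⟩ := i
      push Not at hi
      obtain ⟨k, rfl, hk⟩ := hi
      simp [hτ k hk]
    rw [h0, add_zero]
  intro σhat
  constructor
  · intro h
    let τ : Fin (r - p) ⊕ Fin p → ℝ := fun i =>
      if hi : ∀ k : Fin p, i = Sum.inr k → (Sum.inr k : Fin n ⊕ Fin p) ∉ B then σhat ⟨i, hi⟩ else 0
    have hτ0 : ∀ k : Fin p, Sum.inr k ∈ B → τ (Sum.inr k) = 0 := by
      intro k hk
      exact dif_neg (fun hh => hh k rfl hk)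
    have hτ : σhat = fun i => τ i.1 := by
      ext i
      simp only [τ]
      rw [dif_pos i.2]
    have hsol : Dᵀ.mulVec τ = w := by
      ext j
      by_cases hj : ∃ k : Fin p, col j = Sum.inr k
      · obtain ⟨k, hk⟩ := hj
        rw [hslack τ j k hk, hτ0 k (hBcol j k hk), hw j ⟨k, hk⟩]
      · have hj' : ∀ k : Fin p, col j ≠ Sum.inr k := fun k hk => hj ⟨k, hk⟩
        rw [← hres τ hτ0 ⟨j, hj'⟩, ← hτ]
        exact congrFun h ⟨j, hj'⟩
    have : τ = σ := hinj (hsol.trans hσ.symm)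
    rw [hτ, this]
  · rintro rfl
    ext j
    rw [hres σ hzero j, hσ]
end
end
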